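/- arXiv:2206.06232 — 4 statements merged into one kernel-verified Lean document; each statement's English description precedes it below -/
import Mathlib

section
/- Let L : ℝ^d → ℝ be differentiable and β-smooth with β > 0, bounded below with infimum L*, and satisfying the μ-Polyak–Łojasiewicz inequality (1/2)‖∇L(w)‖² ≥ μ(L(w) − L*) for all w, with μ > 0. Let 0 < γ < 1/β and 0 ≤ ρ < 1/β, and define w_{t+1} = w_t − γ∇L(w_t + ρ∇L(w_t)) from any w_0 ∈ ℝ^d. Then for every t ≥ 0, L(w_t) − L* ≤ (1 − 2γμ(1 − ρβ)(1 − (γβ/2)(1 − ρβ)))^t · (L(w_0) − L*). -/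
open scoped RealInnerProductSpace

theorem sam_descent {d : ℕ}
    (L : EuclideanSpace ℝ (Fin d) → ℝ)
    (g : EuclideanSpace ℝ (Fin d) → EuclideanSpace ℝ (Fin d))
    (hg : ∀ x, HasGradientAt L (g x) x)
    (β : ℝ) (hlip : ∀ x y, ‖g x - g y‖ ≤ β * ‖x - y‖)
    (x v : EuclideanSpace ℝ (Fin d)) :
    L (x + v) ≤ L x + inner ℝ (g x) v + β / 2 * ‖v‖ ^ 2 := by
  have hd : ∀ s : ℝ, HasDerivAt
      (fun s : ℝ => L (x + s • v) - (s * inner ℝ (g x) v + β / 2 * ‖v‖ ^ 2 * s ^ 2))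
      (inner ℝ (g (x + s • v)) v - (1 * inner ℝ (g x) v + β / 2 * ‖v‖ ^ 2 * (2 * s))) s := by
    intro s
    have h1 : HasDerivAt (fun s : ℝ => x + s • v) v s := by
      simpa using ((hasDerivAt_id s).smul_const v).const_add x
    have h2 := (hg (x + s • v)).hasFDerivAt.comp_hasDerivAt s h1
    have h3 : HasDerivAt (fun s : ℝ => s ^ 2) (2 * s) s := by
      simpa using hasDerivAt_pow 2 s
    have h4 := ((hasDerivAt_id s).mul_const (inner ℝ (g x) v)).add
      (h3.const_mul (β / 2 * ‖v‖ ^ 2))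
    have h5 := h2.sub h4
    have h6 := h5.congr_deriv (g' := inner ℝ (g (x + s • v)) v - (1 * inner ℝ (g x) v + β / 2 * ‖v‖ ^ 2 * (2 * s))) (by simp)
    exact h6
  have hanti := antitoneOn_of_deriv_nonpos (convex_Icc (0 : ℝ) 1)
    (fun s _ => (hd s).continuousAt.continuousWithinAt)
    (fun s _ => (hd s).differentiableAt.differentiableWithinAt)
    (fun s hs => by
      rw [interior_Icc] at hs
      rw [(hd s).deriv]
      have e1 : inner ℝ (g (x + s • v)) v - inner ℝ (g x) v
          = inner ℝ (g (x + s • v) - g x) v := by rw [inner_sub_left]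
      have e2 := real_inner_le_norm (g (x + s • v) - g x) v
      have e3 := hlip (x + s • v) x
      rw [add_sub_cancel_left, norm_smul, Real.norm_eq_abs, abs_of_pos hs.1] at e3
      have e4 := mul_le_mul_of_nonneg_right e3 (norm_nonneg v)
      nlinarith)
  have := hanti (Set.left_mem_Icc.2 zero_le_one) (Set.right_mem_Icc.2 zero_le_one) zero_le_one
  simp at this
  linarith

/-- Linear convergence of full-batch SAM under the Polyak–Łojasiewicz
condition: if `L` is differentiable, `β`-smooth (`β > 0`), bounded below with infimum `L*`,
satisfies the `μ`-PL inequality `(1/2)‖∇L(w)‖² ≥ μ(L(w) − L*)` with `μ > 0`, and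
`0 < γ < 1/β`, `0 ≤ ρ < 1/β`, then the iterates `w_{t+1} = w_t − γ∇L(w_t + ρ∇L(w_t))`
satisfy, for every `t`,
`L(w_t) − L* ≤ (1 − 2γμ(1 − ρβ)(1 − (γβ/2)(1 − ρβ)))^t · (L(w_0) − L*)`. -/
theorem sam_fullbatch_convergence_pl {d : ℕ}
    (L : EuclideanSpace ℝ (Fin d) → ℝ)
    (g : EuclideanSpace ℝ (Fin d) → EuclideanSpace ℝ (Fin d))
    (hg : ∀ x, HasGradientAt L (g x) x)
    (β : ℝ) (hβ : 0 < β) (hLip : LipschitzWith β.toNNReal g)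
    (Lstar : ℝ) (hinf : IsGLB (Set.range L) Lstar)
    (μ : ℝ) (hμ : 0 < μ)
    (hPL : ∀ v, μ * (L v - Lstar) ≤ 1 / 2 * ‖g v‖ ^ 2)
    (γ ρ : ℝ) (hγ0 : 0 < γ) (hγ1 : γ < 1 / β) (hρ0 : 0 ≤ ρ) (hρ1 : ρ < 1 / β)
    (w : ℕ → EuclideanSpace ℝ (Fin d))
    (hrec : ∀ t : ℕ, w (t + 1) = w t - γ • g (w t + ρ • g (w t)))
    (t : ℕ) :
    L (w t) - Lstar ≤
      (1 - 2 * γ * μ * (1 - ρ * β) * (1 - γ * β / 2 * (1 - ρ * β))) ^ t * (L (w 0) - Lstar) := by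
  have hlip : ∀ x y, ‖g x - g y‖ ≤ β * ‖x - y‖ := by
    intro x y
    have := hLip.norm_sub_le x y
    rwa [Real.coe_toNNReal β hβ.le] at this
  have hgap : ∀ v, 0 ≤ L v - Lstar := fun v => sub_nonneg.2 (hinf.1 ⟨v, rfl⟩)
  have ha : γ * β < 1 := by rwa [lt_div_iff₀ hβ] at hγ1
  have hr : ρ * β < 1 := by rwa [lt_div_iff₀ hβ] at hρ1
  have ha0 : 0 < γ * β := mul_pos hγ0 hβ
  have hr0 : 0 ≤ ρ * β := mul_nonneg hρ0 hβ.le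
  set c := 1 - 2 * γ * μ * (1 - ρ * β) * (1 - γ * β / 2 * (1 - ρ * β)) with hc
  have step : ∀ t, L (w (t + 1)) - Lstar ≤ c * (L (w t) - Lstar) := by
    intro t
    rw [hrec t]
    obtain ⟨e, he⟩ : ∃ e, g (w t + ρ • g (w t)) = g (w t) + e := ⟨_, (add_sub_cancel _ _).symm⟩
    have hen : ‖e‖ ≤ ρ * β * ‖g (w t)‖ := by
      have := hlip (w t + ρ • g (w t)) (w t)
      rw [he, add_sub_cancel_left, add_sub_cancel_left, norm_smul, Real.norm_eq_abs,
        abs_of_nonneg hρ0] at this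
      linarith
    have hD := sam_descent L g hg β hlip (w t) (-(γ • g (w t + ρ • g (w t))))
    rw [← sub_eq_add_neg, norm_neg, norm_smul, inner_neg_right, inner_smul_right, he,
      inner_add_right, real_inner_self_eq_norm_sq, mul_pow, norm_add_sq_real,
      Real.norm_eq_abs, sq_abs] at hD
    rw [he]
    have hi : -inner ℝ (g (w t)) e ≤ ρ * β * ‖g (w t)‖ ^ 2 := by
      have h1 := neg_le_of_abs_le (abs_real_inner_le_norm (g (w t)) e)
      have h2 := mul_le_mul_of_nonneg_left hen (norm_nonneg (g (w t)))
      nlinarith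
    have hsq : ‖e‖ ^ 2 ≤ (ρ * β) ^ 2 * ‖g (w t)‖ ^ 2 := by
      rw [← mul_pow]
      exact pow_le_pow_left₀ (norm_nonneg e) hen 2
    have hpl := hPL (w t)
    have k1 := mul_le_mul_of_nonneg_left hi (mul_nonneg hγ0.le (sub_nonneg.2 ha.le))
    have k2 := mul_le_mul_of_nonneg_left hsq (mul_nonneg hγ0.le (half_pos ha0).le)
    have hpos : 0 ≤ 2 * γ * (1 - ρ * β) * (1 - γ * β / 2 * (1 - ρ * β)) := by
      have : 0 ≤ 1 - γ * β / 2 * (1 - ρ * β) := by nlinarith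
      have : 0 ≤ 1 - ρ * β := by linarith
      positivity
    have k3 := mul_le_mul_of_nonneg_left hpl hpos
    rw [hc]
    linarith
  by_cases hc0 : 0 ≤ c
  · induction t with
    | zero => simp
    | succ n ih =>
      calc L (w (n + 1)) - Lstar ≤ c * (L (w n) - Lstar) := step n
        _ ≤ c * (c ^ n * (L (w 0) - Lstar)) := mul_le_mul_of_nonneg_left ih hc0
        _ = _ := by ring
  · have hz : ∀ t, L (w t) - Lstar = 0 := by
      intro t
      have h1 := (hgap (w (t + 1))).trans (step t)
      have h2 := hgap (w t)
      by_contra hne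
      have h3 : 0 < L (w t) - Lstar := lt_of_le_of_ne h2 (Ne.symm hne)
      have := mul_neg_of_neg_of_pos (not_le.1 hc0) h3
      linarith
    rw [hz t, hz 0, mul_zero]
end

section
/- Assume each ℓ_i is differentiable with β-Lipschitz gradient (individual β-smoothness, β > 0) and the bounded variance condition (A1) holds with constant σ ≥ 0. Fix a batch size b ≥ 1, a point w ∈ ℝ^d, and ρ ≥ 0. Then, averaging uniformly over all batches J ∈ {1,…,n}^b, E_J⟨∇L_J(w + ρ∇L_J(w)), ∇L(w)⟩ ≥ (1/2 − ρβ)·‖∇L(w)‖² − β²ρ²σ²/(2b). -/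
open scoped RealInnerProductSpace

/-- The full (training) loss `L(w) = (1/n) ∑ᵢ ℓᵢ(w)`. -/
noncomputable def fullLoss {d n : ℕ} (ℓ : Fin n → EuclideanSpace ℝ (Fin d) → ℝ)
    (w : EuclideanSpace ℝ (Fin d)) : ℝ :=
  (n : ℝ)⁻¹ * ∑ i, ℓ i w

/-- The full gradient `∇L(w) = (1/n) ∑ᵢ ∇ℓᵢ(w)` (given per-example gradients `g i`). -/
noncomputable def fullGrad {d n : ℕ}
    (g : Fin n → EuclideanSpace ℝ (Fin d) → EuclideanSpace ℝ (Fin d))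
    (w : EuclideanSpace ℝ (Fin d)) : EuclideanSpace ℝ (Fin d) :=
  (n : ℝ)⁻¹ • ∑ i, g i w

/-- The mini-batch gradient `∇L_J(w) = (1/b) ∑_{k<b} ∇ℓ_{J k}(w)` for a batch
`J : Fin b → Fin n` (sampling with replacement). -/
noncomputable def batchGrad {d n b : ℕ}
    (g : Fin n → EuclideanSpace ℝ (Fin d) → EuclideanSpace ℝ (Fin d))
    (J : Fin b → Fin n) (w : EuclideanSpace ℝ (Fin d)) : EuclideanSpace ℝ (Fin d) :=
  (b : ℝ)⁻¹ • ∑ k, g (J k) w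

theorem aux_sum_succ {n b : ℕ} {M : Type*} [AddCommMonoid M] (F : (Fin (b + 1) → Fin n) → M) :
    ∑ J, F J = ∑ i : Fin n, ∑ J : Fin b → Fin n, F (Fin.cons i J) := by
  rw [← (Fin.consEquiv (fun _ : Fin (b + 1) => Fin n)).sum_comp, Fintype.sum_prod_type]
  rfl

theorem aux_mean {n d : ℕ} (c : Fin n → EuclideanSpace ℝ (Fin d)) (hc : ∑ i, c i = 0) (b : ℕ) :
    ∑ J : Fin b → Fin n, ∑ k, c (J k) = 0 := by
  induction b with
  | zero => simp
  | succ b ih =>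
    rw [aux_sum_succ]
    simp only [Fin.sum_univ_succ, Fin.cons_zero, Fin.cons_succ, Finset.sum_add_distrib, ih]
    simp [← Finset.smul_sum, hc]

theorem aux_var {n d : ℕ} (c : Fin n → EuclideanSpace ℝ (Fin d)) (hc : ∑ i, c i = 0) (b : ℕ) :
    (n : ℝ) * ∑ J : Fin b → Fin n, ‖∑ k, c (J k)‖ ^ 2 = b * n ^ b * ∑ i, ‖c i‖ ^ 2 := by
  induction b with
  | zero => simp
  | succ b ih =>
    rw [aux_sum_succ]
    simp only [Fin.sum_univ_succ, Fin.cons_zero, Fin.cons_succ, norm_add_sq_real,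
      Finset.sum_add_distrib, ← Finset.mul_sum, ← inner_sum, aux_mean c hc b]
    simp only [inner_zero_right, Finset.sum_const, Finset.card_univ, Fintype.card_pi,
      Fintype.card_fin, Finset.prod_const, nsmul_eq_mul, ← Finset.mul_sum]
    push_cast
    rw [mul_add, ih]
    ring

theorem aux_lip {d n b : ℕ} (hb : 1 ≤ b)
    (g : Fin n → EuclideanSpace ℝ (Fin d) → EuclideanSpace ℝ (Fin d))
    (β : ℝ) (hβ : 0 < β) (hLip : ∀ i, LipschitzWith β.toNNReal (g i)) (J : Fin b → Fin n)
    (x y : EuclideanSpace ℝ (Fin d)) :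
    ‖batchGrad g J x - batchGrad g J y‖ ≤ β * ‖x - y‖ := by
  have hb' : (0 : ℝ) < b := by exact_mod_cast hb
  unfold batchGrad
  rw [← smul_sub, ← Finset.sum_sub_distrib, norm_smul, norm_inv, Real.norm_natCast,
    inv_mul_le_iff₀ hb']
  refine (norm_sum_le _ _).trans ?_
  have h : ∀ k ∈ (Finset.univ : Finset (Fin b)),
      ‖g (J k) x - g (J k) y‖ ≤ β * ‖x - y‖ := by
    intro k _
    have := (hLip (J k)).norm_sub_le x y
    rwa [Real.coe_toNNReal _ hβ.le] at this
  refine (Finset.sum_le_sum h).trans ?_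
  simp

/-- Alignment of the stochastic m-SAM direction (the *same* batch `J` used
for ascent and descent) with the full gradient: under individual `β`-smoothness of each
`ℓᵢ` and bounded variance (A1), for every `w` and `ρ ≥ 0`, averaging uniformly over all
batches `J ∈ {1,…,n}^b`,
`E_J⟨∇L_J(w + ρ∇L_J(w)), ∇L(w)⟩ ≥ (1/2 − ρβ)‖∇L(w)‖² − β²ρ²σ²/(2b)`. -/
theorem msam_stochastic_alignment {d n b : ℕ} (hn : 0 < n) (hb : 1 ≤ b)
    (ℓ : Fin n → EuclideanSpace ℝ (Fin d) → ℝ)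
    (g : Fin n → EuclideanSpace ℝ (Fin d) → EuclideanSpace ℝ (Fin d))
    (hg : ∀ i x, HasGradientAt (ℓ i) (g i x) x)
    (β : ℝ) (hβ : 0 < β) (hLip : ∀ i, LipschitzWith β.toNNReal (g i))
    (σ : ℝ) (hσ : 0 ≤ σ)
    (hvar : ∀ x, (n : ℝ)⁻¹ * ∑ i, ‖g i x - fullGrad g x‖ ^ 2 ≤ σ ^ 2)
    (w : EuclideanSpace ℝ (Fin d)) (ρ : ℝ) (hρ : 0 ≤ ρ) :
    (1 / 2 - ρ * β) * ‖fullGrad g w‖ ^ 2 - β ^ 2 * ρ ^ 2 * σ ^ 2 / (2 * b) ≤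
      ((n : ℝ) ^ b)⁻¹ *
        ∑ J : Fin b → Fin n,
          ⟪batchGrad g J (w + ρ • batchGrad g J w), fullGrad g w⟫ := by
  have hn' : (0 : ℝ) < n := by exact_mod_cast hn
  have hb' : (0 : ℝ) < b := by exact_mod_cast hb
  set G := fullGrad g w with hG
  set c : Fin n → EuclideanSpace ℝ (Fin d) := fun i => g i w - G with hc
  have hc0 : ∑ i, c i = 0 := by
    simp only [hc, Finset.sum_sub_distrib, Finset.sum_const, Finset.card_univ, Fintype.card_fin]
    rw [hG, fullGrad, ← Nat.cast_smul_eq_nsmul ℝ, smul_smul, mul_inv_cancel₀ hn'.ne', one_smul,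
      sub_self]
  have hB : ∀ J : Fin b → Fin n, batchGrad g J w = G + (b : ℝ)⁻¹ • ∑ k, c (J k) := by
    intro J
    simp only [hc, Finset.sum_sub_distrib, Finset.sum_const, Finset.card_univ, Fintype.card_fin]
    rw [batchGrad, ← Nat.cast_smul_eq_nsmul ℝ, smul_sub, smul_smul, inv_mul_cancel₀ hb'.ne',
      one_smul]
    abel
  have hpt : ∀ J : Fin b → Fin n,
      (1 / 2 - ρ * β) * ‖G‖ ^ 2 + (b : ℝ)⁻¹ * ⟪∑ k, c (J k), G⟫
        - β ^ 2 * ρ ^ 2 / (2 * b ^ 2) * ‖∑ k, c (J k)‖ ^ 2 ≤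
      ⟪batchGrad g J (w + ρ • batchGrad g J w), G⟫ := by
    intro J
    set s := ∑ k, c (J k)
    have h1 := aux_lip hb g β hβ hLip J (w + ρ • batchGrad g J w) (w + ρ • G)
    have h2 := aux_lip hb g β hβ hLip J (w + ρ • G) w
    have e1 : (w + ρ • batchGrad g J w) - (w + ρ • G) = (ρ * (b : ℝ)⁻¹) • s := by
      rw [hB J, smul_add, smul_smul]; abel
    rw [e1, norm_smul, Real.norm_of_nonneg (by positivity)] at h1
    rw [add_sub_cancel_left, norm_smul, Real.norm_of_nonneg hρ] at h2
    set P := batchGrad g J (w + ρ • batchGrad g J w)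
    set Q := batchGrad g J (w + ρ • G)
    have e2 : ⟪P, G⟫ = ⟪P - Q, G⟫ + ⟪Q - batchGrad g J w, G⟫ + (‖G‖ ^ 2 + (b : ℝ)⁻¹ * ⟪s, G⟫) := by
      rw [← real_inner_self_eq_norm_sq, ← real_inner_smul_left, ← inner_add_left, ← inner_add_left,
        ← inner_add_left, ← hB J]
      congr 1; abel
    have h3 := (abs_le.mp (abs_real_inner_le_norm (Q - batchGrad g J w) G)).1
    have h4 := (abs_le.mp (abs_real_inner_le_norm (P - Q) G)).1
    have h5 : ‖Q - batchGrad g J w‖ * ‖G‖ ≤ β * (ρ * ‖G‖) * ‖G‖ := by gcongr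
    have h6 : ‖P - Q‖ ^ 2 ≤ (β * (ρ * (b : ℝ)⁻¹ * ‖s‖)) ^ 2 := by gcongr
    have h7 : (β * (ρ * (b : ℝ)⁻¹ * ‖s‖)) ^ 2 = 2 * (β ^ 2 * ρ ^ 2 / (2 * b ^ 2) * ‖s‖ ^ 2) := by
      field_simp
    rw [e2]
    nlinarith [sq_nonneg (‖P - Q‖ - ‖G‖)]
  have hsum := Finset.sum_le_sum (fun J (_ : J ∈ (Finset.univ : Finset (Fin b → Fin n))) => hpt J)
  simp only [Finset.sum_sub_distrib, Finset.sum_add_distrib, ← Finset.mul_sum, ← sum_inner,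
    aux_mean c hc0 b, inner_zero_left, Finset.sum_const, Finset.card_univ, Fintype.card_pi,
    Fintype.card_fin, Finset.prod_const, nsmul_eq_mul, mul_zero, add_zero] at hsum
  push_cast at hsum
  have hN : (0 : ℝ) < (n : ℝ) ^ b := by positivity
  rw [le_inv_mul_iff₀ hN, ← sum_inner]
  refine le_trans ?_ hsum
  have hV : ∑ J : Fin b → Fin n, ‖∑ k, c (J k)‖ ^ 2 ≤ b * n ^ b * σ ^ 2 := by
    have h := aux_var c hc0 b
    have hv := hvar w
    rw [inv_mul_le_iff₀ hn'] at hv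
    have : (b : ℝ) * n ^ b * ∑ i, ‖c i‖ ^ 2 ≤ b * n ^ b * (n * σ ^ 2) := by gcongr
    rw [← h] at this
    refine le_of_mul_le_mul_left (this.trans_eq ?_) hn'
    ring
  have hfin : β ^ 2 * ρ ^ 2 / (2 * b ^ 2) * ∑ J : Fin b → Fin n, ‖∑ k, c (J k)‖ ^ 2 ≤
      β ^ 2 * ρ ^ 2 / (2 * b ^ 2) * (b * n ^ b * σ ^ 2) := by gcongr
  have e : β ^ 2 * ρ ^ 2 / (2 * (b : ℝ) ^ 2) * (b * n ^ b * σ ^ 2) =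
      n ^ b * (β ^ 2 * ρ ^ 2 * σ ^ 2 / (2 * b)) := by
    field_simp
  rw [mul_sub]
  linarith
end

section
/- Assume each ℓ_i is differentiable with β-Lipschitz gradient (individual β-smoothness, β > 0) and the bounded variance condition (A1) holds with constant σ ≥ 0. Fix a batch size b ≥ 1, step sizes 0 ≤ γ ≤ 1/β and 0 ≤ ρ ≤ 1/(4β), and a point w ∈ ℝ^d. For a batch J ∈ {1,…,n}^b define the m-SAM step (same batch in ascent and descent) w⁺(J) = w − γ∇L_J(w + ρ∇L_J(w)). Then, averaging uniformly over all batches J, E_J L(w⁺(J)) ≤ L(w) − (3γ/8)·‖∇L(w)‖² + γβ(σ²/b)(γ + 2ρ²β). -/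
open scoped RealInnerProductSpace

theorem aux_descent {d : ℕ} (f : EuclideanSpace ℝ (Fin d) → ℝ)
    (g : EuclideanSpace ℝ (Fin d) → EuclideanSpace ℝ (Fin d))
    (hg : ∀ x, HasGradientAt f (g x) x) (β : ℝ) (hβ : 0 < β)
    (hLip : ∀ x y, ‖g x - g y‖ ≤ β * ‖x - y‖) (x v : EuclideanSpace ℝ (Fin d)) :
    f (x + v) ≤ f x + inner ℝ (g x) v + β / 2 * ‖v‖ ^ 2 := by
  have hd : ∀ t : ℝ, HasDerivAt
      (fun t : ℝ => f (x + t • v) - t * inner ℝ (g x) v - t ^ 2 * (β / 2 * ‖v‖ ^ 2))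
      (inner ℝ (g (x + t • v)) v - inner ℝ (g x) v - 2 * t * (β / 2 * ‖v‖ ^ 2)) t := by
    intro t
    have h1 : HasDerivAt (fun t : ℝ => x + t • v) v t := by
      simpa using ((hasDerivAt_id t).smul_const v).const_add x
    have h2 := (hg (x + t • v)).hasFDerivAt.comp_hasDerivAt t h1
    have h3 := (hasDerivAt_id t).mul_const (inner ℝ (g x) v)
    have h4 := ((hasDerivAt_id t).pow 2).mul_const (β / 2 * ‖v‖ ^ 2)
    have h5 := (h2.sub h3).sub h4
    refine (h5.congr_deriv ?_)
    simp
  have hanti : AntitoneOn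
      (fun t : ℝ => f (x + t • v) - t * inner ℝ (g x) v - t ^ 2 * (β / 2 * ‖v‖ ^ 2))
      (Set.Icc 0 1) := by
    apply antitoneOn_of_deriv_nonpos (convex_Icc 0 1)
    · exact fun t _ => (hd t).continuousAt.continuousWithinAt
    · exact fun t _ => (hd t).differentiableAt.differentiableWithinAt
    · intro t ht
      rw [interior_Icc] at ht
      rw [(hd t).deriv, ← inner_sub_left]
      have h1 := real_inner_le_norm (g (x + t • v) - g x) v
      have h2 := hLip (x + t • v) x
      rw [add_sub_cancel_left, norm_smul, Real.norm_of_nonneg ht.1.le] at h2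
      have h3 := mul_le_mul_of_nonneg_right h2 (norm_nonneg v)
      nlinarith
  have := hanti (Set.left_mem_Icc.2 zero_le_one) (Set.right_mem_Icc.2 zero_le_one) zero_le_one
  simp at this
  linarith

theorem aux_descent_full {d n : ℕ} (hn : 0 < n)
    (ℓ : Fin n → EuclideanSpace ℝ (Fin d) → ℝ)
    (g : Fin n → EuclideanSpace ℝ (Fin d) → EuclideanSpace ℝ (Fin d))
    (hg : ∀ i x, HasGradientAt (ℓ i) (g i x) x)
    (β : ℝ) (hβ : 0 < β) (hLip : ∀ i x y, ‖g i x - g i y‖ ≤ β * ‖x - y‖)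
    (x v : EuclideanSpace ℝ (Fin d)) :
    fullLoss ℓ (x + v) ≤ fullLoss ℓ x + inner ℝ (fullGrad g x) v + β / 2 * ‖v‖ ^ 2 := by
  have hn' : (0 : ℝ) < n := by exact_mod_cast hn
  have h := Finset.sum_le_sum (s := Finset.univ) (fun i (_ : i ∈ Finset.univ) =>
    aux_descent (ℓ i) (g i) (hg i) β hβ (hLip i) x v)
  have h2 := mul_le_mul_of_nonneg_left h (inv_nonneg.2 hn'.le)
  unfold fullLoss fullGrad
  rw [real_inner_smul_left, sum_inner]
  refine h2.trans (le_of_eq ?_)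
  simp only [Finset.sum_add_distrib, Finset.sum_const, Finset.card_univ, Fintype.card_fin,
    nsmul_eq_mul]
  field_simp

theorem aux_sum_cons {n b : ℕ} {M : Type*} [AddCommMonoid M] (F : (Fin (b + 1) → Fin n) → M) :
    ∑ J, F J = ∑ J : Fin b → Fin n, ∑ i : Fin n, F (Fin.cons i J) := by
  rw [← (Fin.consEquiv (fun _ : Fin (b + 1) => Fin n)).sum_comp, Fintype.sum_prod_type,
    Finset.sum_comm]
  rfl

theorem aux_lin {n : ℕ} {E : Type*} [NormedAddCommGroup E] [InnerProductSpace ℝ E]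
    (ξ : Fin n → E) (h0 : ∑ i, ξ i = 0) (b : ℕ) :
    ∑ J : Fin b → Fin n, ∑ k, ξ (J k) = 0 := by
  induction b with
  | zero => simp
  | succ b ih =>
    rw [aux_sum_cons]
    simp [Fin.sum_univ_succ, Finset.sum_add_distrib, h0, ← Finset.smul_sum, ih]

theorem aux_sq {n : ℕ} {E : Type*} [NormedAddCommGroup E] [InnerProductSpace ℝ E]
    (ξ : Fin n → E) (h0 : ∑ i, ξ i = 0) (b : ℕ) :
    (n : ℝ) * ∑ J : Fin b → Fin n, ‖∑ k, ξ (J k)‖ ^ 2 = b * n ^ b * ∑ i, ‖ξ i‖ ^ 2 := by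
  induction b with
  | zero => simp
  | succ b ih =>
    rw [aux_sum_cons]
    simp only [Fin.sum_univ_succ, Fin.cons_zero, Fin.cons_succ, norm_add_sq_real,
      Finset.sum_add_distrib, ← Finset.mul_sum, ← sum_inner, h0, inner_zero_left,
      Finset.sum_const, Finset.card_univ, Fintype.card_fin, Fintype.card_fun, nsmul_eq_mul]
    rw [ih]
    push_cast
    ring

theorem aux_point (γ β ρ : ℝ) {E : Type*} [NormedAddCommGroup E] [InnerProductSpace ℝ E]
    (hβ : 0 < β) (hγ0 : 0 ≤ γ) (ha : γ * β ≤ 1) (hρ0 : 0 ≤ ρ) (hr : β * ρ ≤ 1 / 4)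
    (G u e : E) (he : ‖e‖ ≤ β * ρ * ‖G + u‖) :
    inner ℝ G (-(γ • (G + u + e))) + β / 2 * ‖-(γ • (G + u + e))‖ ^ 2 ≤
      - (3 * γ / 8) * ‖G‖ ^ 2 + γ * (-(1 - γ * β) + (1 + γ * β) * (β * ρ) ^ 2) * inner ℝ G u
        + γ * β * (γ + 2 * ρ ^ 2 * β) * ‖u‖ ^ 2 := by
  have hA : 0 ≤ γ * β := by positivity
  have hr0 : 0 ≤ β * ρ := by positivity
  have hr2 : (β * ρ) ^ 2 ≤ 1 / 16 := by nlinarith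
  have he2 : ‖e‖ ^ 2 ≤ (β * ρ) ^ 2 * ‖G + u‖ ^ 2 := by
    rw [← mul_pow]; exact pow_le_pow_left₀ (norm_nonneg _) he 2
  have h1 : 0 ≤ ‖G + e‖ ^ 2 := by positivity
  have h2 : 0 ≤ ‖u - e‖ ^ 2 := by positivity
  rw [norm_neg, norm_smul, mul_pow, Real.norm_eq_abs, sq_abs, inner_neg_right,
    real_inner_smul_right, inner_add_right, inner_add_right, real_inner_self_eq_norm_sq,
    norm_add_sq_real (G + u), norm_add_sq_real G u, inner_add_left]
  rw [norm_add_sq_real] at he2 h1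
  rw [norm_sub_sq_real] at h2
  generalize inner ℝ G u = p at *
  generalize inner ℝ G e = q at *
  generalize inner ℝ u e = s at *
  have hG : 0 ≤ ‖G‖ ^ 2 := by positivity
  have hu : 0 ≤ ‖u‖ ^ 2 := by positivity
  generalize ‖G‖ ^ 2 = x at *
  generalize ‖u‖ ^ 2 = y at *
  generalize ‖e‖ ^ 2 = z at *
  obtain ⟨r, hrr⟩ : ∃ r, r = (β * ρ) ^ 2 := ⟨_, rfl⟩
  have e1 : γ * β * (γ + 2 * ρ ^ 2 * β) = γ * (γ * β + 2 * r) := by rw [hrr]; ring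
  rw [e1]
  have hr0' : 0 ≤ r := by rw [hrr]; positivity
  rw [← hrr] at hr2 he2 ⊢
  clear e1 hrr he
  obtain ⟨a, haa⟩ : ∃ a, a = γ * β := ⟨_, rfl⟩
  have key : -(x + p + q) + a / 2 * (x + 2 * p + y + 2 * (q + s) + z) ≤
      - (3 / 8) * x + (-(1 - a) + (1 + a) * r) * p + (a + 2 * r) * y := by
    rw [← haa] at ha hA
    have k1 := mul_nonneg (sub_nonneg.2 ha) h1
    have k2 := mul_nonneg hA h2
    have k3 := mul_nonneg (by linarith : 0 ≤ 1 + a) (sub_nonneg.2 he2)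
    have k4 := mul_nonneg (mul_nonneg (sub_nonneg.2 ha) hr0') hG
    have k5 := mul_nonneg (mul_nonneg (sub_nonneg.2 ha) hr0') hu
    have k6 := mul_nonneg (sub_nonneg.2 hr2) hG
    have k7 := mul_nonneg hr0' hu
    nlinarith
  have := mul_le_mul_of_nonneg_left key hγ0
  rw [haa] at this
  nlinarith

/-- Expected descent for one stochastic m-SAM step (same batch in ascent
and descent): under individual `β`-smoothness, (A1), `0 ≤ γ ≤ 1/β` and `0 ≤ ρ ≤ 1/(4β)`,
averaging uniformly over all batches `J`,
`E_J L(w − γ∇L_J(w + ρ∇L_J(w))) ≤ L(w) − (3γ/8)‖∇L(w)‖² + γβ(σ²/b)(γ + 2ρ²β)`. -/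
theorem msam_stochastic_descent {d n b : ℕ} (hn : 0 < n) (hb : 1 ≤ b)
    (ℓ : Fin n → EuclideanSpace ℝ (Fin d) → ℝ)
    (g : Fin n → EuclideanSpace ℝ (Fin d) → EuclideanSpace ℝ (Fin d))
    (hg : ∀ i x, HasGradientAt (ℓ i) (g i x) x)
    (β : ℝ) (hβ : 0 < β) (hLip : ∀ i, LipschitzWith β.toNNReal (g i))
    (σ : ℝ) (hσ : 0 ≤ σ)
    (hvar : ∀ x, (n : ℝ)⁻¹ * ∑ i, ‖g i x - fullGrad g x‖ ^ 2 ≤ σ ^ 2)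
    (γ ρ : ℝ) (hγ0 : 0 ≤ γ) (hγ1 : γ ≤ 1 / β) (hρ0 : 0 ≤ ρ) (hρ1 : ρ ≤ 1 / (4 * β))
    (w : EuclideanSpace ℝ (Fin d)) :
    ((n : ℝ) ^ b)⁻¹ *
        ∑ J : Fin b → Fin n,
          fullLoss ℓ (w - γ • batchGrad g J (w + ρ • batchGrad g J w)) ≤
      fullLoss ℓ w - 3 * γ / 8 * ‖fullGrad g w‖ ^ 2 +
        γ * β * (σ ^ 2 / b) * (γ + 2 * ρ ^ 2 * β) := by
  have hLip' : ∀ i x y, ‖g i x - g i y‖ ≤ β * ‖x - y‖ := by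
    intro i x y
    have := (hLip i).norm_sub_le x y
    rwa [Real.coe_toNNReal β hβ.le] at this
  have hn' : (0 : ℝ) < n := by exact_mod_cast hn
  have hb' : (0 : ℝ) < b := by exact_mod_cast hb
  have ha : γ * β ≤ 1 := by rwa [le_div_iff₀ hβ] at hγ1
  have hr : β * ρ ≤ 1 / 4 := by
    rw [le_div_iff₀ (by positivity)] at hρ1
    linarith
  set G := fullGrad g w with hG
  have h0 : ∑ i, (g i w - G) = 0 := by
    rw [Finset.sum_sub_distrib, hG, fullGrad]
    simp only [Finset.sum_const, Finset.card_univ, Fintype.card_fin]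
    rw [← Nat.cast_smul_eq_nsmul ℝ, smul_smul, mul_inv_cancel₀ hn'.ne', one_smul, sub_self]
  have hu : ∀ J : Fin b → Fin n,
      batchGrad g J w = G + (b : ℝ)⁻¹ • ∑ k, (g (J k) w - G) := by
    intro J
    rw [Finset.sum_sub_distrib, batchGrad]
    simp only [Finset.sum_const, Finset.card_univ, Fintype.card_fin]
    rw [← Nat.cast_smul_eq_nsmul ℝ, smul_sub, smul_smul, inv_mul_cancel₀ hb'.ne', one_smul]
    abel
  have hbL : ∀ (J : Fin b → Fin n) (x y : EuclideanSpace ℝ (Fin d)),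
      ‖batchGrad g J x - batchGrad g J y‖ ≤ β * ‖x - y‖ := by
    intro J x y
    rw [batchGrad, batchGrad, ← smul_sub, ← Finset.sum_sub_distrib, norm_smul,
      Real.norm_of_nonneg (inv_nonneg.2 hb'.le), inv_mul_le_iff₀ hb']
    refine (norm_sum_le _ _).trans ?_
    refine (Finset.sum_le_sum fun k _ => hLip' (J k) x y).trans (le_of_eq ?_)
    simp
  have hpt : ∀ J : Fin b → Fin n,
      fullLoss ℓ (w - γ • batchGrad g J (w + ρ • batchGrad g J w)) ≤
      (fullLoss ℓ w - 3 * γ / 8 * ‖G‖ ^ 2) +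
        γ * (-(1 - γ * β) + (1 + γ * β) * (β * ρ) ^ 2) * (b : ℝ)⁻¹ *
          inner ℝ G (∑ k, (g (J k) w - G)) +
        γ * β * (γ + 2 * ρ ^ 2 * β) * ((b : ℝ)⁻¹) ^ 2 * ‖∑ k, (g (J k) w - G)‖ ^ 2 := by
    intro J
    have h1 := aux_descent_full hn ℓ g hg β hβ hLip' w
      (-(γ • batchGrad g J (w + ρ • batchGrad g J w)))
    have h2 := hbL J (w + ρ • batchGrad g J w) w
    rw [add_sub_cancel_left, norm_smul, Real.norm_of_nonneg hρ0, ← mul_assoc] at h2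
    have h3 := aux_point γ β ρ hβ hγ0 ha hρ0 hr G ((b : ℝ)⁻¹ • ∑ k, (g (J k) w - G))
      (batchGrad g J (w + ρ • batchGrad g J w) - batchGrad g J w) (by rw [← hu]; exact h2)
    rw [← hu, add_sub_cancel, real_inner_smul_right, norm_smul _ (∑ k, (g (J k) w - G)), mul_pow,
      Real.norm_of_nonneg (inv_nonneg.2 hb'.le)] at h3
    rw [← sub_eq_add_neg, ← hG] at h1
    linarith
  have hs := Finset.sum_le_sum (s := Finset.univ)
    (fun J (_ : J ∈ (Finset.univ : Finset (Fin b → Fin n))) => hpt J)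
  simp only [Finset.sum_add_distrib, ← Finset.mul_sum, ← inner_sum] at hs
  rw [aux_lin (fun i => g i w - G) h0 b, inner_zero_right, mul_zero, add_zero,
    Finset.sum_const, Finset.card_univ, Fintype.card_fun, Fintype.card_fin, Fintype.card_fin,
    nsmul_eq_mul, Nat.cast_pow] at hs
  have hsq := aux_sq (fun i => g i w - G) h0 b
  have hv := hvar w
  rw [← hG, inv_mul_le_iff₀ hn'] at hv
  have hS : ∑ J : Fin b → Fin n, ‖∑ k, (g (J k) w - G)‖ ^ 2 ≤ b * n ^ b * σ ^ 2 := by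
    have := mul_le_mul_of_nonneg_left hv (by positivity : (0 : ℝ) ≤ b * n ^ b)
    rw [← hsq] at this
    refine le_of_mul_le_mul_left (this.trans (le_of_eq ?_)) hn'
    ring
  have hC : 0 ≤ γ * β * (γ + 2 * ρ ^ 2 * β) * ((b : ℝ)⁻¹) ^ 2 := by positivity
  have hS2 := mul_le_mul_of_nonneg_left hS hC
  rw [inv_mul_le_iff₀ (by positivity)]
  refine hs.trans ((add_le_add_right hS2 _).trans (le_of_eq ?_))
  field_simp
end

section
/- Assume each ℓ_i is differentiable with β-Lipschitz gradient (individual β-smoothness, β > 0), L is bounded below with infimum L*, and (A1) holds with constant σ ≥ 0. Fix a batch size b ≥ 1, a horizon T ≥ 256, and step sizes γ = 1/(√T·β), ρ = 1/(T^{1/4}·β). From any w_0, define for each batch sequence (J_0,…,J_{T−1}) the stochastic m-SAM iterates w_{t+1} = w_t − γ∇L_{J_t}(w_t + ρ∇L_{J_t}(w_t)). Then, averaging uniformly over all batch sequences, (1/T)·E[∑_{t=0}^{T−1} ‖∇L(w_t)‖²] ≤ (4β/√T)·(L(w_0) − L*) + 8σ²/(b√T). -/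
open scoped RealInnerProductSpace

/-- Resampling one coordinate. -/
theorem sum_update_aux {ι A M : Type*} [Fintype ι] [DecidableEq ι] [Fintype A] [AddCommMonoid M]
    (k : ι) (f : (ι → A) → M) :
    ∑ S : ι → A, ∑ J : A, f (Function.update S k J) = Fintype.card A • ∑ S : ι → A, f S := by
  let e : (ι → A) × A ≃ (ι → A) × A :=
    { toFun := fun p => (Function.update p.1 k p.2, p.1 k)
      invFun := fun p => (Function.update p.1 k p.2, p.1 k)
      left_inv := fun p => by simp
      right_inv := fun p => by simp }
  have h := Equiv.sum_comp e (fun p : (ι → A) × A => f p.1)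
  rw [Fintype.sum_prod_type, Fintype.sum_prod_type] at h
  simp only [e, Equiv.coe_fn_mk, Finset.sum_const, Finset.card_univ] at h
  rw [h, Finset.smul_sum]

section
variable {E : Type*} [NormedAddCommGroup E] [InnerProductSpace ℝ E]

theorem descent_aux [CompleteSpace E] (L : E → ℝ) (G : E → E) (β : ℝ)
    (hg : ∀ x, HasGradientAt L (G x) x) (hL : ∀ x y, ‖G x - G y‖ ≤ β * ‖x - y‖) (w h : E) :
    L (w + h) ≤ L w + inner ℝ (G w) h + β / 2 * ‖h‖ ^ 2 := by
  let φ : ℝ → ℝ := fun t => L (w + t • h) - t * inner ℝ (G w) h - β / 2 * ‖h‖ ^ 2 * t ^ 2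
  have hd : ∀ t, HasDerivAt φ (inner ℝ (G (w + t • h)) h - inner ℝ (G w) h
      - β / 2 * ‖h‖ ^ 2 * (2 * t)) t := by
    intro t
    have h1 : HasDerivAt (fun t : ℝ => w + t • h) h t := by
      simpa using ((hasDerivAt_id t).smul_const h).const_add w
    have h2 := (hg (w + t • h)).hasFDerivAt.comp_hasDerivAt t h1
    have h3 := (h2.sub ((hasDerivAt_id t).mul_const (inner ℝ (G w) h))).sub
      (((hasDerivAt_id t).pow 2).const_mul (β / 2 * ‖h‖ ^ 2))
    have e : inner ℝ (G (w + t • h)) h - inner ℝ (G w) h - β / 2 * ‖h‖ ^ 2 * (2 * t)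
        = InnerProductSpace.toDual ℝ E (G (w + t • h)) h - 1 * inner ℝ (G w) h
          - β / 2 * ‖h‖ ^ 2 * (((2 : ℕ) : ℝ) * id t ^ (2 - 1) * 1) := by
      simp
    rw [e]
    exact h3
  have hanti : AntitoneOn φ (Set.Icc 0 1) := by
    apply antitoneOn_of_deriv_nonpos (convex_Icc 0 1)
    · exact fun t _ => (hd t).continuousAt.continuousWithinAt
    · exact fun t _ => (hd t).differentiableAt.differentiableWithinAt
    · intro t ht
      rw [interior_Icc] at ht
      rw [(hd t).deriv, ← inner_sub_left]
      have h1 := real_inner_le_norm (G (w + t • h) - G w) h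
      have h2 := hL (w + t • h) w
      rw [add_sub_cancel_left, norm_smul, Real.norm_of_nonneg ht.1.le] at h2
      have h3 := mul_le_mul_of_nonneg_right h2 (norm_nonneg h)
      nlinarith
  have := hanti (Set.left_mem_Icc.2 zero_le_one) (Set.right_mem_Icc.2 zero_le_one) zero_le_one
  simp only [φ, one_smul, zero_smul, add_zero] at this
  linarith

theorem sum_coord_aux {n b : ℕ} {M : Type*} [AddCommGroup M] [Module ℝ M] (hn : 0 < n)
    (f : Fin n → M) (k : Fin b) :
    ∑ J : Fin b → Fin n, f (J k) = ((n : ℝ) ^ b * (n : ℝ)⁻¹) • ∑ i, f i := by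
  have h := sum_update_aux k (fun J : Fin b → Fin n => f (J k))
  simp only [Function.update_self, Finset.sum_const, Finset.card_univ, Fintype.card_pi,
    Fintype.card_fin, Finset.prod_const] at h
  have hn' : (n : ℝ) ≠ 0 := by positivity
  rw [← Nat.cast_smul_eq_nsmul ℝ, ← Nat.cast_smul_eq_nsmul ℝ] at h
  rw [mul_comm, mul_smul, eq_inv_smul_iff₀ hn', ← h]
  simp

theorem cross_aux {n b : ℕ} (hn : 0 < n) (x : Fin n → E) (hx : ∑ i, x i = 0) (k l : Fin b)
    (hkl : k ≠ l) : ∑ J : Fin b → Fin n, inner ℝ (x (J k)) (x (J l)) = 0 := by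
  have h := sum_update_aux k (fun J : Fin b → Fin n => inner ℝ (x (J k)) (x (J l)))
  simp only [Function.update_self, Function.update_of_ne hkl.symm, ← sum_inner, hx,
    inner_zero_left, Finset.sum_const_zero] at h
  simp only [Fintype.card_fin, nsmul_eq_mul] at h
  have hn' : (n : ℝ) ≠ 0 := by positivity
  exact (mul_eq_zero.1 h.symm).resolve_left hn'

theorem var_aux {n b : ℕ} (hn : 0 < n) (x : Fin n → E) (hx : ∑ i, x i = 0) :
    ∑ J : Fin b → Fin n, ‖∑ k, x (J k)‖ ^ 2
      = (n : ℝ) ^ b * (b * ((n : ℝ)⁻¹ * ∑ i, ‖x i‖ ^ 2)) := by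
  have h1 : ∀ J : Fin b → Fin n, ‖∑ k, x (J k)‖ ^ 2
      = ∑ k, ∑ l, inner ℝ (x (J k)) (x (J l)) := by
    intro J
    rw [← real_inner_self_eq_norm_sq, sum_inner]
    simp only [inner_sum]
  simp only [h1]
  rw [Finset.sum_comm]
  have h2 : ∀ k : Fin b, ∑ J : Fin b → Fin n, ∑ l, inner ℝ (x (J k)) (x (J l))
      = (n : ℝ) ^ b * ((n : ℝ)⁻¹ * ∑ i, ‖x i‖ ^ 2) := by
    intro k
    rw [Finset.sum_comm, Finset.sum_eq_single k]
    · simp only [real_inner_self_eq_norm_sq]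
      rw [sum_coord_aux hn (fun i => ‖x i‖ ^ 2) k, smul_eq_mul, mul_assoc]
    · intro l _ hl
      exact cross_aux hn x hx k l hl.symm
    · simp
  simp only [h2, Finset.sum_const, Finset.card_univ, Fintype.card_fin, nsmul_eq_mul]
  ring

end

section
variable {d n b : ℕ}

theorem fullGrad_centered (hn : 0 < n)
    (g : Fin n → EuclideanSpace ℝ (Fin d) → EuclideanSpace ℝ (Fin d))
    (w : EuclideanSpace ℝ (Fin d)) : ∑ i, (g i w - fullGrad g w) = 0 := by
  have hn' : (n : ℝ) ≠ 0 := by positivity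
  rw [Finset.sum_sub_distrib, Finset.sum_const, Finset.card_univ, Fintype.card_fin,
    ← Nat.cast_smul_eq_nsmul ℝ, fullGrad, smul_inv_smul₀ hn', sub_self]

theorem batch_sub (hb : 1 ≤ b)
    (g : Fin n → EuclideanSpace ℝ (Fin d) → EuclideanSpace ℝ (Fin d))
    (J : Fin b → Fin n) (w : EuclideanSpace ℝ (Fin d)) :
    batchGrad g J w = fullGrad g w + (b : ℝ)⁻¹ • ∑ k, (g (J k) w - fullGrad g w) := by
  have hb' : (b : ℝ) ≠ 0 := by positivity
  rw [Finset.sum_sub_distrib, Finset.sum_const, Finset.card_univ, Fintype.card_fin,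
    ← Nat.cast_smul_eq_nsmul ℝ, smul_sub, inv_smul_smul₀ hb', batchGrad]
  abel

theorem batch_mean (hn : 0 < n) (hb : 1 ≤ b)
    (g : Fin n → EuclideanSpace ℝ (Fin d) → EuclideanSpace ℝ (Fin d))
    (w : EuclideanSpace ℝ (Fin d)) :
    ∑ J : Fin b → Fin n, batchGrad g J w = ((n : ℝ) ^ b) • fullGrad g w := by
  have h : ∑ J : Fin b → Fin n, ∑ k, (g (J k) w - fullGrad g w) = 0 := by
    rw [Finset.sum_comm]
    refine Finset.sum_eq_zero fun k _ => ?_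
    rw [sum_coord_aux hn (fun i => g i w - fullGrad g w) k, fullGrad_centered hn, smul_zero]
  simp only [batch_sub hb g]
  rw [Finset.sum_add_distrib, ← Finset.smul_sum, h, smul_zero, add_zero, Finset.sum_const,
    Finset.card_univ, ← Nat.cast_smul_eq_nsmul ℝ]
  simp

theorem batch_sq (hn : 0 < n) (hb : 1 ≤ b)
    (g : Fin n → EuclideanSpace ℝ (Fin d) → EuclideanSpace ℝ (Fin d)) (σ : ℝ)
    (w : EuclideanSpace ℝ (Fin d))
    (hvar : (n : ℝ)⁻¹ * ∑ i, ‖g i w - fullGrad g w‖ ^ 2 ≤ σ ^ 2) :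
    ∑ J : Fin b → Fin n, ‖batchGrad g J w‖ ^ 2
      ≤ ((n : ℝ) ^ b) * (‖fullGrad g w‖ ^ 2 + σ ^ 2 / b) := by
  have hb' : (0 : ℝ) < b := by positivity
  have hm := batch_mean hn hb g w
  have hv := var_aux (b := b) hn (fun i => g i w - fullGrad g w) (fullGrad_centered hn g w)
  have h1 : ∀ J : Fin b → Fin n, ‖batchGrad g J w‖ ^ 2 =
      2 * inner ℝ (batchGrad g J w) (fullGrad g w) - ‖fullGrad g w‖ ^ 2
      + ((b : ℝ)⁻¹) ^ 2 * ‖∑ k, (g (J k) w - fullGrad g w)‖ ^ 2 := by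
    intro J
    have h2 : (b : ℝ)⁻¹ • ∑ k, (g (J k) w - fullGrad g w) = batchGrad g J w - fullGrad g w := by
      rw [batch_sub hb g J w]; abel
    have h3 : ((b : ℝ)⁻¹) ^ 2 * ‖∑ k, (g (J k) w - fullGrad g w)‖ ^ 2
        = ‖batchGrad g J w - fullGrad g w‖ ^ 2 := by
      rw [← h2, norm_smul, mul_pow]; simp
    rw [h3, norm_sub_sq_real]; ring
  simp only [h1]
  rw [Finset.sum_add_distrib, Finset.sum_sub_distrib, ← Finset.mul_sum, ← Finset.mul_sum,
    ← sum_inner, hm, hv, inner_smul_left, real_inner_self_eq_norm_sq]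
  simp only [Finset.sum_const, Finset.card_univ, Fintype.card_pi, Fintype.card_fin,
    Finset.prod_const, nsmul_eq_mul, Nat.cast_pow, conj_trivial]
  have h4 : ((b : ℝ)⁻¹) ^ 2 * ((n : ℝ) ^ b * (b * ((n : ℝ)⁻¹ * ∑ i, ‖g i w - fullGrad g w‖ ^ 2)))
      = (n : ℝ) ^ b * (((n : ℝ)⁻¹ * ∑ i, ‖g i w - fullGrad g w‖ ^ 2) / b) := by
    field_simp
  rw [h4]
  have h5 : (n : ℝ) ^ b * (((n : ℝ)⁻¹ * ∑ i, ‖g i w - fullGrad g w‖ ^ 2) / b)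
      ≤ (n : ℝ) ^ b * (σ ^ 2 / b) := by gcongr
  linarith

theorem mean_lip {m : ℕ} (hm : 0 < m) (f : Fin m → EuclideanSpace ℝ (Fin d)) (c : ℝ)
    (hf : ∀ i, ‖f i‖ ≤ c) : ‖(m : ℝ)⁻¹ • ∑ i, f i‖ ≤ c := by
  have hm' : (0 : ℝ) < m := by positivity
  rw [norm_smul, norm_inv, Real.norm_of_nonneg hm'.le, inv_mul_le_iff₀ hm']
  calc ‖∑ i, f i‖ ≤ ∑ i : Fin m, c := norm_sum_le_of_le _ fun i _ => hf i
    _ = m * c := by simp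

theorem step_aux (hn : 0 < n) (hb : 1 ≤ b)
    (ℓ : Fin n → EuclideanSpace ℝ (Fin d) → ℝ)
    (g : Fin n → EuclideanSpace ℝ (Fin d) → EuclideanSpace ℝ (Fin d))
    (hg : ∀ i x, HasGradientAt (ℓ i) (g i x) x)
    (β : ℝ) (hβ : 0 < β) (hLip : ∀ i, LipschitzWith β.toNNReal (g i))
    (σ : ℝ) (w : EuclideanSpace ℝ (Fin d))
    (hvar : (n : ℝ)⁻¹ * ∑ i, ‖g i w - fullGrad g w‖ ^ 2 ≤ σ ^ 2)
    (a γ ρ : ℝ) (ha : 0 < a) (ha4 : a ≤ 1 / 4) (hγ : β * γ = a ^ 2) (hρ : β * ρ = a) :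
    ∑ J : Fin b → Fin n, fullLoss ℓ (w - γ • batchGrad g J (w + ρ • batchGrad g J w))
      ≤ (n : ℝ) ^ b * (fullLoss ℓ w - γ / 4 * ‖fullGrad g w‖ ^ 2 + 2 * γ * a ^ 2 * (σ ^ 2 / b)) := by
  have hL : ∀ i x y, ‖g i x - g i y‖ ≤ β * ‖x - y‖ := by
    intro i x y
    have := (hLip i).norm_sub_le x y
    rwa [Real.coe_toNNReal _ hβ.le] at this
  have hγ0 : 0 < γ := by
    by_contra h
    nlinarith [mul_nonneg hβ.le (neg_nonneg.2 (not_lt.1 h)), pow_pos ha 2]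
  have hρ0 : 0 < ρ := by
    by_contra h
    nlinarith [mul_nonneg hβ.le (neg_nonneg.2 (not_lt.1 h))]
  have hFg : ∀ x, HasGradientAt (fullLoss ℓ) (fullGrad g x) x := by
    intro x
    rw [hasGradientAt_iff_hasFDerivAt]
    have h := (HasFDerivAt.fun_sum (u := Finset.univ)
      (fun i _ => (hg i x).hasFDerivAt)).const_mul ((n : ℝ)⁻¹)
    have e : InnerProductSpace.toDual ℝ (EuclideanSpace ℝ (Fin d)) (fullGrad g x) =
        (n : ℝ)⁻¹ • ∑ i, InnerProductSpace.toDual ℝ (EuclideanSpace ℝ (Fin d)) (g i x) := by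
      simp [fullGrad, map_sum]
    rw [e]
    exact h
  have hFL : ∀ x y, ‖fullGrad g x - fullGrad g y‖ ≤ β * ‖x - y‖ := by
    intro x y
    have := mean_lip hn (fun i => g i x - g i y) _ (fun i => hL i x y)
    rwa [Finset.sum_sub_distrib, smul_sub] at this
  have hBL : ∀ (J : Fin b → Fin n) x y, ‖batchGrad g J x - batchGrad g J y‖ ≤ β * ‖x - y‖ := by
    intro J x y
    have := mean_lip hb (fun k => g (J k) x - g (J k) y) _ (fun i => hL _ x y)
    rwa [Finset.sum_sub_distrib, smul_sub] at this
  have hpt : ∀ J : Fin b → Fin n,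
      fullLoss ℓ (w - γ • batchGrad g J (w + ρ • batchGrad g J w)) ≤
        (fullLoss ℓ w + γ / 4 * ‖fullGrad g w‖ ^ 2)
        - γ * inner ℝ (batchGrad g J w) (fullGrad g w)
        + γ * a ^ 2 * (57 / 32) * ‖batchGrad g J w‖ ^ 2 := by
    intro J
    set v := batchGrad g J w with hv
    set u := batchGrad g J (w + ρ • v) with hu
    set G := fullGrad g w with hG
    have hd := descent_aux _ _ β hFg hFL w (-(γ • u))
    rw [← sub_eq_add_neg, ← hG, inner_neg_right, inner_smul_right, norm_neg, norm_smul,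
      Real.norm_of_nonneg hγ0.le] at hd
    have he : ‖u - v‖ ≤ a * ‖v‖ := by
      have := hBL J (w + ρ • v) w
      rwa [add_sub_cancel_left, norm_smul, Real.norm_of_nonneg hρ0.le, ← mul_assoc, hρ] at this
    have hu' : ‖u‖ ≤ 5 / 4 * ‖v‖ := by
      have : ‖u‖ ≤ ‖u - v‖ + ‖v‖ := by simpa using norm_add_le (u - v) v
      nlinarith [norm_nonneg v]
    have hin : inner ℝ G u = inner ℝ v G + inner ℝ G (u - v) := by
      rw [inner_sub_right, real_inner_comm v G]; ring
    have hc : -inner ℝ G (u - v) ≤ ‖G‖ * (a * ‖v‖) := by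
      have h1 := abs_real_inner_le_norm G (u - v)
      have h2 := neg_abs_le (inner ℝ G (u - v))
      have h3 := mul_le_mul_of_nonneg_left he (norm_nonneg G)
      linarith
    have hY : ‖G‖ * (a * ‖v‖) ≤ ‖G‖ ^ 2 / 4 + a ^ 2 * ‖v‖ ^ 2 := by
      nlinarith [sq_nonneg (‖G‖ / 2 - a * ‖v‖)]
    have hu2 : ‖u‖ ^ 2 ≤ 25 / 16 * ‖v‖ ^ 2 := by
      nlinarith [norm_nonneg u, norm_nonneg v]
    have hq : β / 2 * (γ * ‖u‖) ^ 2 ≤ γ * a ^ 2 * (25 / 32) * ‖v‖ ^ 2 := by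
      have : β / 2 * (γ * ‖u‖) ^ 2 = γ * a ^ 2 / 2 * ‖u‖ ^ 2 := by rw [← hγ]; ring
      rw [this]
      have := mul_le_mul_of_nonneg_left hu2 (by positivity : 0 ≤ γ * a ^ 2 / 2)
      linarith
    have hm := mul_le_mul_of_nonneg_left (hc.trans hY) hγ0.le
    rw [hin] at hd
    linarith
  refine (Finset.sum_le_sum fun J _ => hpt J).trans ?_
  rw [Finset.sum_add_distrib, Finset.sum_sub_distrib, ← Finset.mul_sum, ← Finset.mul_sum,
    ← sum_inner, batch_mean hn hb, inner_smul_left, real_inner_self_eq_norm_sq]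
  simp only [Finset.sum_const, Finset.card_univ, Fintype.card_pi, Fintype.card_fin,
    Finset.prod_const, nsmul_eq_mul, Nat.cast_pow, conj_trivial]
  have h1 := mul_le_mul_of_nonneg_left (batch_sq hn hb g σ w hvar)
    (by positivity : 0 ≤ γ * a ^ 2 * (57 / 32))
  have h2 : γ * a ^ 2 * (57 / 32) * ((n : ℝ) ^ b * (‖fullGrad g w‖ ^ 2 + σ ^ 2 / b)) ≤
      (n : ℝ) ^ b * (γ * (1 / 2) * ‖fullGrad g w‖ ^ 2 + 2 * γ * a ^ 2 * (σ ^ 2 / b)) := by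
    have ha2 : a ^ 2 ≤ 1 / 16 := by nlinarith
    have e1 : γ * a ^ 2 * (57 / 32) ≤ γ * (1 / 2) := by nlinarith
    have e2 : γ * a ^ 2 * (57 / 32) ≤ 2 * γ * a ^ 2 := by nlinarith [mul_pos hγ0 (pow_pos ha 2)]
    have e3 : (0 : ℝ) ≤ σ ^ 2 / b := by positivity
    calc _ = (n : ℝ) ^ b * (γ * a ^ 2 * (57 / 32) * ‖fullGrad g w‖ ^ 2
          + γ * a ^ 2 * (57 / 32) * (σ ^ 2 / b)) := by ring
      _ ≤ _ := by gcongr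
  nlinarith

end

/-- Convergence of stochastic m-SAM with the horizon-dependent step sizes
`γ = 1/(√T·β)`, `ρ = 1/(T^{1/4}·β)`: under individual `β`-smoothness, (A1), boundedness below
of `L` with infimum `L*`, and `T ≥ 256`, iterating
`w_{t+1} = w_t − γ∇L_{J_t}(w_t + ρ∇L_{J_t}(w_t))` from `w_0` and averaging uniformly over all
batch sequences,
`(1/T)·E[∑_{t<T} ‖∇L(w_t)‖²] ≤ (4β/√T)(L(w_0) − L*) + 8σ²/(b√T)`. -/
theorem msam_stochastic_convergence_rate {d n b : ℕ} (hn : 0 < n) (hb : 1 ≤ b)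
    (ℓ : Fin n → EuclideanSpace ℝ (Fin d) → ℝ)
    (g : Fin n → EuclideanSpace ℝ (Fin d) → EuclideanSpace ℝ (Fin d))
    (hg : ∀ i x, HasGradientAt (ℓ i) (g i x) x)
    (β : ℝ) (hβ : 0 < β) (hLip : ∀ i, LipschitzWith β.toNNReal (g i))
    (σ : ℝ) (hσ : 0 ≤ σ)
    (hvar : ∀ x, (n : ℝ)⁻¹ * ∑ i, ‖g i x - fullGrad g x‖ ^ 2 ≤ σ ^ 2)
    (Lstar : ℝ) (hinf : IsGLB (Set.range (fullLoss ℓ)) Lstar)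
    (T : ℕ) (hT : 256 ≤ T)
    (γ ρ : ℝ) (hγ : γ = 1 / (Real.sqrt T * β)) (hρ : ρ = 1 / ((T : ℝ) ^ ((1 : ℝ) / 4) * β))
    (w0 : EuclideanSpace ℝ (Fin d))
    (W : (Fin T → (Fin b → Fin n)) → ℕ → EuclideanSpace ℝ (Fin d))
    (hW0 : ∀ S, W S 0 = w0)
    (hWrec : ∀ S, ∀ t : Fin T,
      W S ((t : ℕ) + 1) =
        W S (t : ℕ) - γ • batchGrad g (S t) (W S (t : ℕ) + ρ • batchGrad g (S t) (W S (t : ℕ)))) :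
    (1 / (T : ℝ)) *
        ((Fintype.card (Fin T → (Fin b → Fin n)) : ℝ)⁻¹ *
          ∑ S : Fin T → (Fin b → Fin n), ∑ t ∈ Finset.range T, ‖fullGrad g (W S t)‖ ^ 2) ≤
      4 * β / Real.sqrt T * (fullLoss ℓ w0 - Lstar) + 8 * σ ^ 2 / (b * Real.sqrt T) := by
  classical
  set q : ℝ := (T : ℝ) ^ ((1 : ℝ) / 4) with hq
  have hTpos : (0 : ℝ) < T := by
    have : 0 < T := by omega
    exact_mod_cast this
  have hq0 : 0 < q := Real.rpow_pos_of_pos hTpos _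
  have hq4 : q ^ 4 = T := by
    rw [hq, ← Real.rpow_natCast, ← Real.rpow_mul hTpos.le]; norm_num
  have hsq : Real.sqrt T = q ^ 2 := by
    rw [← hq4, show q ^ 4 = (q ^ 2) ^ 2 by ring, Real.sqrt_sq (by positivity)]
  have hqge : 4 ≤ q := by
    have h : (4 : ℝ) ^ 4 ≤ q ^ 4 := by
      rw [hq4]; norm_num; exact_mod_cast hT
    exact le_of_pow_le_pow_left₀ (by norm_num) hq0.le h
  rw [hsq] at hγ ⊢
  have ha0 : 0 < q⁻¹ := inv_pos.2 hq0
  have ha4 : q⁻¹ ≤ 1 / 4 := by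
    rw [one_div]; exact inv_anti₀ (by norm_num) hqge
  have hγ' : β * γ = q⁻¹ ^ 2 := by rw [hγ]; field_simp
  have hρ' : β * ρ = q⁻¹ := by rw [hρ]; field_simp
  have hγ0 : 0 < γ := by rw [hγ]; positivity
  have hn' : (0 : ℝ) < n := by positivity
  have hloc : ∀ (S S' : Fin T → Fin b → Fin n) (t : ℕ), t ≤ T →
      (∀ s : Fin T, (s : ℕ) < t → S s = S' s) → W S t = W S' t := by
    intro S S' t
    induction t with
    | zero => intro _ _; rw [hW0, hW0]
    | succ t ih =>
      intro ht hs
      have h1 := hWrec S ⟨t, ht⟩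
      have h2 := hWrec S' ⟨t, ht⟩
      simp only at h1 h2
      rw [h1, h2, ih (by omega) (fun s hst => hs s (by omega)), hs ⟨t, ht⟩ (by simp)]
  set N : ℝ := (Fintype.card (Fin T → (Fin b → Fin n)) : ℝ) with hN
  have hN0 : 0 < N := by
    have : Nonempty (Fin n) := ⟨⟨0, hn⟩⟩
    rw [hN]; exact_mod_cast Fintype.card_pos
  have hstep : ∀ t : ℕ, t < T → ∑ S, fullLoss ℓ (W S (t + 1)) ≤
      ∑ S, fullLoss ℓ (W S t) - γ / 4 * ∑ S, ‖fullGrad g (W S t)‖ ^ 2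
        + N * (2 * γ * q⁻¹ ^ 2 * (σ ^ 2 / b)) := by
    intro t ht
    have hu := sum_update_aux (⟨t, ht⟩ : Fin T)
      (fun S : Fin T → Fin b → Fin n => fullLoss ℓ (W S (t + 1)))
    have hup : ∀ (S : Fin T → Fin b → Fin n) (J : Fin b → Fin n),
        W (Function.update S ⟨t, ht⟩ J) (t + 1)
          = W S t - γ • batchGrad g J (W S t + ρ • batchGrad g J (W S t)) := by
      intro S J
      have h1 := hWrec (Function.update S ⟨t, ht⟩ J) ⟨t, ht⟩
      have h2 : W (Function.update S ⟨t, ht⟩ J) t = W S t := by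
        refine hloc _ _ t ht.le fun s hs => Function.update_of_ne ?_ _ _
        intro h; rw [h] at hs; simp at hs
      simp only [Function.update_self] at h1
      rw [h1, h2]
    simp only [hup, nsmul_eq_mul, Fintype.card_pi, Fintype.card_fin, Finset.prod_const,
      Finset.card_univ, Nat.cast_pow] at hu
    have hle := Finset.sum_le_sum (s := Finset.univ)
      fun (S : Fin T → Fin b → Fin n) _ => step_aux hn hb ℓ g hg β hβ hLip σ (W S t)
        (hvar _) q⁻¹ γ ρ ha0 ha4 hγ' hρ'
    rw [hu, ← Finset.mul_sum] at hle
    have hle := le_of_mul_le_mul_left hle (by positivity)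
    rw [Finset.sum_add_distrib, Finset.sum_sub_distrib, ← Finset.mul_sum, Finset.sum_const,
      Finset.card_univ, nsmul_eq_mul] at hle
    exact hle
  have htel : ∀ t : ℕ, t ≤ T → ∑ S, fullLoss ℓ (W S t) ≤
      N * fullLoss ℓ w0 - γ / 4 * ∑ s ∈ Finset.range t, ∑ S, ‖fullGrad g (W S s)‖ ^ 2
        + t * (N * (2 * γ * q⁻¹ ^ 2 * (σ ^ 2 / b))) := by
    intro t
    induction t with
    | zero => intro _; simp [hW0, hN]
    | succ t ih =>
      intro ht
      have h1 := ih (by omega)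
      have h2 := hstep t (by omega)
      rw [Finset.sum_range_succ]
      push_cast
      linarith
  have hlow : N * Lstar ≤ ∑ S, fullLoss ℓ (W S T) := by
    have := Finset.card_nsmul_le_sum Finset.univ (fun S => fullLoss ℓ (W S T)) Lstar
      (fun S _ => hinf.1 ⟨_, rfl⟩)
    rwa [Finset.card_univ, nsmul_eq_mul] at this
  have hfin := hlow.trans (htel T le_rfl)
  rw [Finset.sum_comm]
  set X := ∑ s ∈ Finset.range T, ∑ S, ‖fullGrad g (W S s)‖ ^ 2 with hX
  have hb' : (0 : ℝ) < b := by positivity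
  have hXle : X ≤ N * (4 / γ * (fullLoss ℓ w0 - Lstar) + T * (8 * q⁻¹ ^ 2 * (σ ^ 2 / b))) := by
    have : γ / 4 * X ≤ γ / 4 *
        (N * (4 / γ * (fullLoss ℓ w0 - Lstar) + T * (8 * q⁻¹ ^ 2 * (σ ^ 2 / b)))) := by
      have e : γ / 4 *
        (N * (4 / γ * (fullLoss ℓ w0 - Lstar) + T * (8 * q⁻¹ ^ 2 * (σ ^ 2 / b))))
        = N * (fullLoss ℓ w0 - Lstar) + T * (N * (2 * γ * q⁻¹ ^ 2 * (σ ^ 2 / b))) := by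
        field_simp; ring
      rw [e]; linarith
    exact le_of_mul_le_mul_left this (by positivity)
  have h1 : N⁻¹ * X ≤ 4 / γ * (fullLoss ℓ w0 - Lstar) + T * (8 * q⁻¹ ^ 2 * (σ ^ 2 / b)) := by
    rw [inv_mul_le_iff₀ hN0]; exact hXle
  have h2 := mul_le_mul_of_nonneg_left h1 (by positivity : 0 ≤ 1 / (T : ℝ))
  refine h2.trans (le_of_eq ?_)
  rw [hγ, ← hq4]
  field_simp
end
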